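/- If G is a connected simple graph with maximum degree at most 3 (a subcubic graph) that is not isomorphic to K2 (the complete graph on two vertices), then lir(^2G) ≤ 3. -/

import Mathlib

open scoped Classical

/-- The `c`-degree of a vertex `x`: the sum of the multiplicities `w e c`
over all edges `e` of `G` incident with `x`. -/
noncomputable def colorDeg {V : Type*} [Fintype V] [DecidableEq V]
    (G : SimpleGraph V) {k : ℕ} (w : Sym2 V → Fin k → ℕ) (c : Fin k) (x : V) : ℕ :=
  ∑ e ∈ G.edgeFinset.filter (fun e => x ∈ e), w e c

/-- `w` encodes a locally irregular `k`-edge-coloring of `²G`: each edge of `G`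
gets a multiplicity vector summing to `2`, and for every edge `uv` and every
color `c` with `w s(u,v) c ≥ 1`, the `c`-degrees of `u` and `v` differ. -/
def IsLIRk {V : Type*} [Fintype V] [DecidableEq V]
    (G : SimpleGraph V) {k : ℕ} (w : Sym2 V → Fin k → ℕ) : Prop :=
  (∀ e ∈ G.edgeSet, ∑ c, w e c = 2) ∧
  ∀ u v : V, G.Adj u v → ∀ c : Fin k,
    1 ≤ w s(u, v) c → colorDeg G w c u ≠ colorDeg G w c v

/-- `lir(²G) ≤ k`: there is a locally irregular `k`-edge-coloring of `²G`. -/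
def LIRtwoLE {V : Type*} [Fintype V] [DecidableEq V] (G : SimpleGraph V) (k : ℕ) : Prop :=
  ∃ w : Sym2 V → Fin k → ℕ, IsLIRk G w

/-!
Rank the vertices by their distance to a root, or to a vertex of a triangle `K`, and process them in
order of decreasing distance. Every vertex outside the root or `K` then has, at the time it is
processed, a neighbour that is still unprocessed, hence at most two processed ones. When `v` is
processed, its edges to unprocessed neighbours are not colored yet; instead `v` makes an *offer*, a
short list of pairs consisting of a coloring of such an edge and of the color degrees that `v` will
then have, and `v` can later comply with any of them. What makes the induction work is a finite
family of offers such that, whatever offers the processed neighbours of `v` have made, some offer in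
the family can be answered for by choosing suitably from theirs.

If `G` contains a triangle, take it as `K`: each of its vertices has at most one offer to choose
from, and the colorings of the three edges of `K` leave enough freedom to finish. If `G` is
triangle-free, take a root `ρ` of degree at least two: each neighbour of `ρ` has no other
unprocessed neighbour when it is processed, so it makes `ρ` one of the more generous, *flexible*
offers, and two of these suffice to color the edges at `ρ`.
-/

/-- What a processed vertex `u` guarantees to its neighbours that are still unprocessed: an edge
from `u` to such a neighbour has multiplicity vector `mult`, and `u` ends up with `c`-degree
`total c` for every color `c` with `mult c ≠ 0`. The other values of `total` are meaningless. -/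
@[ext]
structure Promise (k : ℕ) where
  mult : Fin k → ℕ
  total : Fin k → ℕ

namespace Promise

variable {k : ℕ}

/-- The empty promise, which stands for a missing neighbour. -/
def idle : Promise k := ⟨0, 0⟩

/-- Both copies of the edge get color `a`. -/
def mono (a : Fin k) (m : ℕ) : Promise k :=
  ⟨fun c => if c = a then 2 else 0, fun _ => m⟩

/-- The two copies of the edge get the distinct colors `a` and `b`. -/
def duo (a b : Fin k) (m n : ℕ) : Promise k :=
  ⟨fun c => if c = a ∨ c = b then 1 else 0, fun c => if c = a then m else n⟩

/-- The vertex making the promise keeps it if its color degrees are given by `T`. -/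
def Fulfils (p : Promise k) (T : Fin k → ℕ) : Prop := ∀ c, p.mult c ≠ 0 → T c = p.total c

/-- The vertex receiving the promise may have color degrees `T`: the promised edge is then
locally irregular. -/
def Avoids (p : Promise k) (T : Fin k → ℕ) : Prop := ∀ c, p.mult c ≠ 0 → T c ≠ p.total c

instance : DecidableEq (Promise k) := fun _ _ =>
  decidable_of_iff _ Promise.ext_iff.symm

instance (p : Promise k) (T : Fin k → ℕ) : Decidable (p.Fulfils T) :=
  inferInstanceAs (Decidable (∀ c, p.mult c ≠ 0 → T c = p.total c))

instance (p : Promise k) (T : Fin k → ℕ) : Decidable (p.Avoids T) :=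
  inferInstanceAs (Decidable (∀ c, p.mult c ≠ 0 → T c ≠ p.total c))

theorem avoids_comm {m S T : Fin k → ℕ} : Avoids ⟨m, S⟩ T ↔ Avoids ⟨m, T⟩ S :=
  forall₂_congr fun _ _ => ne_comm

theorem Fulfils.avoids {p : Promise k} {S T : Fin k → ℕ} (hS : p.Fulfils S) (hT : p.Avoids T) :
    Avoids ⟨p.mult, S⟩ T :=
  fun c hc => (hT c hc).trans_eq (hS c hc).symm

theorem exists_padding {V : Type*} {𝓕 : List (List (Promise k))} {B : Finset V} {n : ℕ}
    (hB : B.card ≤ n) {P : V → List (Promise k)} (hP : ∀ u ∈ B, P u ∈ 𝓕) :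
    ∃ Q : Fin n → List (Promise k), (∀ i, Q i ∈ [idle] :: 𝓕) ∧ (∀ i, i.1 < B.card → Q i ∈ 𝓕) ∧
      ∀ q : Fin n → Promise k, (∀ i, q i ∈ Q i) → ∃ p : V → Promise k, (∀ u ∈ B, p u ∈ P u) ∧
        ∑ u ∈ B, (p u).mult = ∑ i, (q i).mult ∧
        ∀ T, (∀ i, (q i).Avoids T) → ∀ u ∈ B, (p u).Avoids T := by
  let slot (u : B) : Fin n := (B.equivFin u).castLE hB
  have slot_lt (i : Fin n) (hi : i.1 < B.card) : slot (B.equivFin.symm ⟨i, hi⟩) = i := by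
    simp [slot]
  let Q (i : Fin n) : List (Promise k) :=
    if hi : i.1 < B.card then P (B.equivFin.symm ⟨i, hi⟩) else [idle]
  have Q_slot (u : B) : Q (slot u) = P u := by simp [Q, slot]
  have hQ (i : Fin n) (hi : i.1 < B.card) : Q i ∈ 𝓕 := by
    simp only [Q, dif_pos hi]
    exact hP _ (Subtype.coe_prop _)
  refine ⟨Q, fun i => ?_, hQ, fun q hq => ?_⟩
  · by_cases hi : i.1 < B.card
    · exact List.mem_cons_of_mem _ (hQ i hi)
    · simp [Q, hi]
  let p (u : V) : Promise k := if hu : u ∈ B then q (slot ⟨u, hu⟩) else idle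
  have p_eq (u : B) : p u = q (slot u) := by simp [p]
  refine ⟨p, fun u hu => ?_, ?_, fun T hT u hu => ?_⟩
  · rw [p_eq ⟨u, hu⟩, ← Q_slot ⟨u, hu⟩]
    exact hq _
  · rw [← Finset.sum_coe_sort]
    refine Finset.sum_of_injOn slot ?_ (by simp) (fun i _ hi => ?_) (fun u _ => by rw [p_eq])
    · exact ((Fin.castLE_injective hB).comp B.equivFin.injective).injOn
    · have hi' : ¬ i.1 < B.card := fun h => hi ⟨_, by simp, slot_lt i h⟩
      have : q i = idle := by simpa [Q, hi'] using hq i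
      simp [this, idle]
  · rw [p_eq ⟨u, hu⟩]
    exact hT _

theorem exists_padding_one {V : Type*} {𝓕 : List (List (Promise k))} {B : Finset V}
    (hB : B.card ≤ 1) {P : V → List (Promise k)} (hP : ∀ u ∈ B, P u ∈ 𝓕) :
    ∃ Q ∈ [idle] :: 𝓕, ∀ q ∈ Q, ∃ p : V → Promise k, (∀ u ∈ B, p u ∈ P u) ∧
      ∑ u ∈ B, (p u).mult = q.mult ∧ ∀ T, q.Avoids T → ∀ u ∈ B, (p u).Avoids T := by
  obtain ⟨Q, hQ, -, hQP⟩ := exists_padding hB hP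
  refine ⟨Q 0, hQ 0, fun q hq => ?_⟩
  simpa using hQP (fun _ => q) (by simpa using hq)

/-- Promises that a vertex with several unprocessed neighbours makes, the same to each of them. -/
def shared : List (Promise 3) := [mono 0 4, mono 0 6, mono 1 4, mono 2 5]

/-- Offers that a vertex makes when only one of its neighbours is unprocessed. The table comes from
a computer search for a small family satisfying `flexible_response` and `flexible_closing`. -/
def flexible : List (List (Promise 3)) := [
  [duo 1 2 3 3, mono 1 4],
  [duo 1 2 2 4, mono 0 4],
  [duo 1 2 3 1, mono 1 4],
  [duo 1 2 5 1, mono 1 6, duo 0 1 1 5],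
  [duo 0 2 5 1, duo 0 1 5 1],
  [mono 2 4, mono 1 2, duo 0 1 1 1],
  [mono 2 3, duo 0 2 2 2, mono 2 4],
  [duo 1 2 3 3, mono 0 4],
  [mono 2 4, mono 1 2, duo 0 1 3 1],
  [mono 2 4, duo 1 2 3 3, duo 0 1 1 3, mono 0 2],
  [mono 1 3, duo 1 2 1 4, mono 1 2],
  [mono 2 2, duo 1 2 3 1, duo 0 2 3 1, duo 0 1 3 3],
  [mono 2 6, mono 1 2, duo 0 1 1 1],
  [mono 2 3, duo 0 2 3 2, mono 2 4],
  [mono 2 2, mono 0 4],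
  [duo 0 2 3 1, mono 1 2],
  [mono 2 2, mono 1 5, mono 2 3],
  [mono 2 3, mono 1 3, duo 1 2 2 1],
  [mono 2 2, duo 1 2 3 1, duo 0 2 1 1, mono 0 2],
  [duo 1 2 5 1, mono 0 3],
  [mono 2 2, mono 1 2, duo 1 2 1 1, mono 0 2]]

/-- The offers a processed vertex may make, each of them a list of promises any of which the vertex
can still be made to keep. -/
def offers : List (List (Promise 3)) := shared.map ([·]) ++ flexible

theorem sum_mult_eq_two : ∀ P ∈ offers, ∀ p ∈ P, ∑ c, p.mult c = 2 := by decide +kernel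

theorem flexible_response : ∀ P ∈ [idle] :: offers, ∀ Q ∈ [idle] :: offers,
    ∃ R ∈ flexible, ∀ r ∈ R, ∃ p ∈ P, ∃ q ∈ Q,
      r.Fulfils (p.mult + q.mult + r.mult) ∧ p.Avoids (p.mult + q.mult + r.mult) ∧
      q.Avoids (p.mult + q.mult + r.mult) := by
  decide +kernel

theorem shared_response : ∀ P ∈ [idle] :: offers, ∃ s ∈ shared, ∃ p ∈ P,
    p.Avoids (p.mult + 2 • s.mult) ∧ s.Fulfils (p.mult + 2 • s.mult) := by
  decide +kernel

theorem shared_initial : ∃ s ∈ shared, s.Fulfils (3 • s.mult) := by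
  decide +kernel

theorem flexible_closing : ∀ P ∈ flexible, ∀ Q ∈ flexible, ∀ R ∈ [idle] :: flexible,
    ∃ p ∈ P, ∃ q ∈ Q, ∃ r ∈ R, p.Avoids (p.mult + q.mult + r.mult) ∧
      q.Avoids (p.mult + q.mult + r.mult) ∧ r.Avoids (p.mult + q.mult + r.mult) := by
  decide +kernel

/-- The multiplicity vectors of a double edge. -/
def doubles : List (Fin 3 → ℕ) :=
  [![2, 0, 0], ![0, 2, 0], ![0, 0, 2], ![1, 1, 0], ![1, 0, 1], ![0, 1, 1]]

theorem sum_eq_two_of_mem_doubles : ∀ x ∈ doubles, ∑ c, x c = 2 := by decide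

/-- Promises of which every offer contains one, and which can be closed up at a triangle. -/
def transversal : List (Promise 3) :=
  [idle, mono 0 4, mono 0 6, mono 1 4, mono 2 5, mono 1 2, mono 2 2, mono 2 3, mono 2 4,
    duo 0 1 5 1, duo 1 2 5 1]

theorem exists_mem_transversal : ∀ P ∈ [idle] :: offers, ∃ p ∈ P, p ∈ transversal := by
  decide +kernel

-- Each condition stands directly after the choices it involves, which prunes the search that
-- `decide` performs.
theorem triangle_closing : ∀ p ∈ transversal, ∀ q ∈ transversal, ∀ r ∈ transversal,
    ∃ x ∈ doubles, ∃ z ∈ doubles, p.Avoids (p.mult + (x + z)) ∧ ∃ y ∈ doubles,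
      q.Avoids (q.mult + (x + y)) ∧ Avoids ⟨x, p.mult + (x + z)⟩ (q.mult + (x + y)) ∧
      r.Avoids (r.mult + (y + z)) ∧ Avoids ⟨y, q.mult + (x + y)⟩ (r.mult + (y + z)) ∧
      Avoids ⟨z, p.mult + (x + z)⟩ (r.mult + (y + z)) := by
  decide +kernel

section LocalResponse

variable {V : Type*} {B F : Finset V} {P : V → List (Promise 3)}

theorem exists_shared_promise (hP : ∀ u ∈ B, P u ∈ offers) {n : ℕ} (hn : 2 ≤ n)
    (hcard : B.card + n ≤ 3) :
    ∃ s ∈ shared, ∃ p : V → Promise 3, (∀ u ∈ B, p u ∈ P u) ∧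
      (∀ u ∈ B, (p u).Avoids (∑ u ∈ B, (p u).mult + n • s.mult)) ∧
      s.Fulfils (∑ u ∈ B, (p u).mult + n • s.mult) := by
  obtain rfl | rfl : n = 2 ∨ n = 3 := by omega
  · obtain ⟨Q, hQ, hQP⟩ := exists_padding_one (Nat.le_of_add_le_add_right hcard) hP
    obtain ⟨s, hs, q, hq, hav_q, hful⟩ := shared_response Q hQ
    obtain ⟨p, hp, hsum, hav⟩ := hQP q hq
    exact ⟨s, hs, p, hp, hsum ▸ hav _ hav_q, hsum ▸ hful⟩
  · obtain rfl : B = ∅ := Finset.card_eq_zero.mp (by omega)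
    obtain ⟨s, hs, hful⟩ := shared_initial
    exact ⟨s, hs, fun _ => idle, by simp, by simp, by simpa using hful⟩

theorem exists_flexible_offer (hP : ∀ u ∈ B, P u ∈ offers) (hB : B.card ≤ 2) :
    ∃ R ∈ flexible, ∀ r ∈ R, ∃ p : V → Promise 3, (∀ u ∈ B, p u ∈ P u) ∧
      (∀ u ∈ B, (p u).Avoids (∑ u ∈ B, (p u).mult + r.mult)) ∧
      r.Fulfils (∑ u ∈ B, (p u).mult + r.mult) := by
  obtain ⟨Q, hQ, -, hQP⟩ := exists_padding hB hP
  obtain ⟨R, hR, hRQ⟩ := flexible_response _ (hQ 0) _ (hQ 1)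
  refine ⟨R, hR, fun r hr => ?_⟩
  obtain ⟨q₀, hq₀, q₁, hq₁, hful, hav₀, hav₁⟩ := hRQ r hr
  obtain ⟨p, hp, hsum, hav⟩ := hQP ![q₀, q₁] (by simp [Fin.forall_fin_two, hq₀, hq₁])
  rw [Fin.sum_univ_two] at hsum
  refine ⟨p, hp, ?_, ?_⟩ <;> rw [hsum]
  · exact hav _ (by simpa [Fin.forall_fin_two] using ⟨hav₀, hav₁⟩)
  · exact hful

theorem exists_offer (hP : ∀ u ∈ B, P u ∈ offers) (hF : F.Nonempty)
    (hcard : B.card + F.card ≤ 3) :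
    ∃ R ∈ offers, (F.card ≤ 1 → R ∈ flexible) ∧
      ∀ r : V → Promise 3, (∀ y ∈ F, r y ∈ R) → ∃ p : V → Promise 3, (∀ u ∈ B, p u ∈ P u) ∧
        (∀ u ∈ B, (p u).Avoids (∑ u ∈ B, (p u).mult + ∑ y ∈ F, (r y).mult)) ∧
        ∀ y ∈ F, (r y).Fulfils (∑ u ∈ B, (p u).mult + ∑ y ∈ F, (r y).mult) := by
  obtain hF_card | hF_card := (Nat.succ_le_of_lt hF.card_pos).eq_or_lt
  · obtain ⟨y, rfl⟩ := Finset.card_eq_one.mp hF_card.symm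
    obtain ⟨R, hR, hRP⟩ := exists_flexible_offer hP (by omega)
    refine ⟨R, List.mem_append_right _ hR, fun _ => hR, fun r hr => ?_⟩
    simpa using hRP (r y) (hr y (by simp))
  · obtain ⟨s, hs, p, hp, hav, hful⟩ := exists_shared_promise hP hF_card hcard
    refine ⟨[s], List.mem_append_left _ (List.mem_map_of_mem hs), by omega, fun r hr => ?_⟩
    simp only [List.mem_singleton] at hr
    have hr_sum : ∑ y ∈ F, (r y).mult = F.card • s.mult := by
      rw [Finset.sum_congr rfl fun y hy => by rw [hr y hy], Finset.sum_const]
    rw [hr_sum]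
    exact ⟨p, hp, hav, fun y hy => by rwa [hr y hy]⟩

theorem exists_closing (hP : ∀ u ∈ B, P u ∈ flexible) (h2 : 2 ≤ B.card) (h3 : B.card ≤ 3) :
    ∃ p : V → Promise 3, (∀ u ∈ B, p u ∈ P u) ∧
      ∀ u ∈ B, (p u).Avoids (∑ u ∈ B, (p u).mult) := by
  obtain ⟨Q, hQ, hQ_lt, hQP⟩ := exists_padding h3 hP
  obtain ⟨q₀, hq₀, q₁, hq₁, q₂, hq₂, hav₀, hav₁, hav₂⟩ :=
    flexible_closing _ (hQ_lt 0 (two_pos.trans_le h2)) _ (hQ_lt 1 (one_lt_two.trans_le h2)) _ (hQ 2)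
  obtain ⟨p, hp, hsum, hav⟩ := hQP ![q₀, q₁, q₂] (by simp [Fin.forall_fin_succ, hq₀, hq₁, hq₂])
  rw [Fin.sum_univ_three] at hsum
  refine ⟨p, hp, ?_⟩
  rw [hsum]
  exact hav _ (by simpa [Fin.forall_fin_succ] using ⟨hav₀, hav₁, hav₂⟩)

theorem exists_triangle_closing {Ba Bb Bc : Finset V} (hBa : Ba.card ≤ 1) (hBb : Bb.card ≤ 1)
    (hBc : Bc.card ≤ 1) (hPa : ∀ u ∈ Ba, P u ∈ offers) (hPb : ∀ u ∈ Bb, P u ∈ offers)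
    (hPc : ∀ u ∈ Bc, P u ∈ offers) :
    ∃ p q r : V → Promise 3, ∃ x ∈ doubles, ∃ y ∈ doubles, ∃ z ∈ doubles,
      ∃ Ta Tb Tc : Fin 3 → ℕ, (∀ u ∈ Ba, p u ∈ P u ∧ (p u).Avoids Ta) ∧
        (∀ u ∈ Bb, q u ∈ P u ∧ (q u).Avoids Tb) ∧ (∀ u ∈ Bc, r u ∈ P u ∧ (r u).Avoids Tc) ∧
        ∑ u ∈ Ba, (p u).mult + (x + z) = Ta ∧ ∑ u ∈ Bb, (q u).mult + (x + y) = Tb ∧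
        ∑ u ∈ Bc, (r u).mult + (y + z) = Tc ∧
        Avoids ⟨x, Ta⟩ Tb ∧ Avoids ⟨y, Tb⟩ Tc ∧ Avoids ⟨z, Ta⟩ Tc := by
  obtain ⟨P', hP', hPa'⟩ := exists_padding_one hBa hPa
  obtain ⟨Q', hQ', hPb'⟩ := exists_padding_one hBb hPb
  obtain ⟨R', hR', hPc'⟩ := exists_padding_one hBc hPc
  obtain ⟨p', hp', hp'_tr⟩ := exists_mem_transversal P' hP'
  obtain ⟨q', hq', hq'_tr⟩ := exists_mem_transversal Q' hQ'
  obtain ⟨r', hr', hr'_tr⟩ := exists_mem_transversal R' hR'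
  obtain ⟨x, hx, z, hz, hp'_av, y, hy, hq'_av, hx_irr, hr'_av, hy_irr, hz_irr⟩ :=
    triangle_closing p' hp'_tr q' hq'_tr r' hr'_tr
  obtain ⟨p, hp, hp_sum, hp_av⟩ := hPa' p' hp'
  obtain ⟨q, hq, hq_sum, hq_av⟩ := hPb' q' hq'
  obtain ⟨r, hr, hr_sum, hr_av⟩ := hPc' r' hr'
  exact ⟨p, q, r, x, hx, y, hy, z, hz, _, _, _, fun u hu => ⟨hp u hu, hp_av _ hp'_av u hu⟩,
    fun u hu => ⟨hq u hu, hq_av _ hq'_av u hu⟩, fun u hu => ⟨hr u hu, hr_av _ hr'_av u hu⟩,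
    hp_sum ▸ rfl, hq_sum ▸ rfl, hr_sum ▸ rfl, hx_irr, hy_irr, hz_irr⟩

end LocalResponse

end Promise

section Splice

variable {V : Type*} {k : ℕ} {U : Finset V}

/-- The coloring that agrees with `w` on the edges meeting `U` and with `g` on the others. -/
noncomputable def splice (U : Finset V) (w g : Sym2 V → Fin k → ℕ) (e : Sym2 V) : Fin k → ℕ :=
  if ∃ u ∈ U, u ∈ e then w e else g e

theorem splice_of_mem {u : V} (hu : u ∈ U) (w g : Sym2 V → Fin k → ℕ) (y : V) :
    splice U w g s(u, y) = w s(u, y) :=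
  if_pos ⟨u, hu, Sym2.mem_mk_left u y⟩

theorem splice_of_notMem {x y : V} (hx : x ∉ U) (hy : y ∉ U)
    (w g : Sym2 V → Fin k → ℕ) : splice U w g s(x, y) = g s(x, y) := by
  refine if_neg ?_
  simp only [Sym2.mem_iff]
  rintro ⟨u, hu, rfl | rfl⟩ <;> contradiction

end Splice

section Connected

variable {V : Type*} {G : SimpleGraph V}

theorem exists_adj_dist_lt (hG : G.Connected) {v ρ : V} (hv : v ≠ ρ) :
    ∃ y, G.Adj v y ∧ G.dist y ρ < G.dist v ρ := by
  obtain ⟨p, hp⟩ := hG.exists_walk_length_eq_dist v ρ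
  cases p with
  | nil => exact absurd rfl hv
  | cons h q =>
    refine ⟨_, h, (G.dist_le q).trans_lt ?_⟩
    rw [← hp, SimpleGraph.Walk.length_cons]
    exact Nat.lt_succ_self _

theorem card_le_two_of_degree_le_one [Fintype V] (hG : G.Connected) (hdeg : ∀ v, G.degree v ≤ 1) :
    Fintype.card V ≤ 2 := by
  have hedges := hG.card_vert_le_card_edgeSet_add_one
  have hsum := G.sum_degrees_eq_twice_card_edges
  have hle : ∑ v, G.degree v ≤ Fintype.card V := by
    simpa using Finset.sum_le_sum fun v (_ : v ∈ Finset.univ) => hdeg v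
  rw [Nat.card_eq_fintype_card, Nat.card_eq_fintype_card, ← SimpleGraph.edgeFinset_card] at hedges
  omega

theorem nonempty_iso_top_of_card_eq_two [Fintype V] (hG : G.Connected)
    (hV : Fintype.card V = 2) : Nonempty (G ≃g (⊤ : SimpleGraph (Fin 2))) := by
  have : Nontrivial V := Fintype.one_lt_card_iff_nontrivial.mp (by omega)
  have hG_top : G = ⊤ := by
    refine eq_top_iff.mpr fun u v huv => ?_
    obtain ⟨y, huy⟩ := hG.preconnected.exists_adj_of_nontrivial u
    obtain ⟨_, -, h_unique⟩ :=
      (Nat.card_eq_two_iff' u).mp (Nat.card_eq_fintype_card.trans hV)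
    rwa [h_unique v huv.symm, ← h_unique y huy.ne']
  rw [hG_top]
  exact ⟨.completeGraph (Fintype.equivFinOfCardEq hV)⟩

end Connected

section Graph

variable {V : Type*} [Fintype V] [DecidableEq V] {G : SimpleGraph V} {k : ℕ}

theorem colorDeg_eq_sum_neighborFinset (w : Sym2 V → Fin k → ℕ) (x : V) :
    (colorDeg G w · x) = ∑ y ∈ G.neighborFinset x, w s(x, y) := by
  ext c
  rw [Finset.sum_apply, colorDeg]
  symm
  refine Finset.sum_nbij (fun y => s(x, y)) (fun y hy => ?_) ?_ (fun e he => ?_) fun _ _ => rfl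
  · simpa using hy
  · exact fun y _ z _ h => Sym2.congr_right.mp h
  · obtain ⟨he, hx⟩ := Finset.mem_filter.mp he
    obtain ⟨y, rfl⟩ := hx
    exact ⟨y, by simpa using he, rfl⟩

theorem neighborFinset_sdiff_compl_insert {v : V} {S : Finset V} (hS : ∀ y ∈ S, G.Adj v y) :
    G.neighborFinset v \ (insert v S)ᶜ = S := by
  ext y
  simp only [Finset.mem_sdiff, SimpleGraph.mem_neighborFinset, Finset.mem_compl,
    Finset.mem_insert, not_not]
  exact ⟨fun h => h.2.resolve_left h.1.ne', fun hy => ⟨hS y hy, Or.inr hy⟩⟩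

theorem neighborFinset_sdiff_compl_triangle {a b c : V} (hab : G.Adj a b) (hac : G.Adj a c)
    (hbc : G.Adj b c) : G.neighborFinset a \ {a, b, c}ᶜ = {b, c} ∧
      G.neighborFinset b \ {a, b, c}ᶜ = {a, c} ∧ G.neighborFinset c \ {a, b, c}ᶜ = {a, b} := by
  refine ⟨neighborFinset_sdiff_compl_insert (by simp [hab, hac]), ?_, ?_⟩
  · rw [Finset.insert_comm]
    exact neighborFinset_sdiff_compl_insert (by simp [hab.symm, hbc])
  · rw [Finset.pair_comm b, Finset.insert_comm]
    exact neighborFinset_sdiff_compl_insert (by simp [hac.symm, hbc.symm])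

theorem colorDeg_splice_of_mem {U : Finset V} {u : V} (hu : u ∈ U) (w g : Sym2 V → Fin k → ℕ) :
    (colorDeg G (splice U w g) · u) = (colorDeg G w · u) := by
  simp only [colorDeg_eq_sum_neighborFinset, splice_of_mem hu]

theorem colorDeg_splice_of_notMem {U : Finset V} {v : V} (hv : v ∉ U)
    (w g : Sym2 V → Fin k → ℕ) :
    (colorDeg G (splice U w g) · v) =
      ∑ u ∈ G.neighborFinset v ∩ U, w s(u, v) + ∑ y ∈ G.neighborFinset v \ U, g s(v, y) := by
  rw [colorDeg_eq_sum_neighborFinset, ← Finset.sum_inter_add_sum_sdiff _ U]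
  congr 1 <;> refine Finset.sum_congr rfl fun y hy => ?_
  · rw [Sym2.eq_swap, splice_of_mem (Finset.mem_inter.mp hy).2]
  · exact splice_of_notMem hv (Finset.mem_sdiff.mp hy).2 w g

/-- `w` is a coloring of the edges meeting `U` which is locally irregular on the edges inside `U`
and keeps the promise `σ u y` on every edge from `u ∈ U` to `y ∉ U`. -/
structure Realizes (G : SimpleGraph V) (U : Finset V) (σ : V → V → Promise k)
    (w : Sym2 V → Fin k → ℕ) : Prop where
  sum_eq_two : ∀ u ∈ U, ∀ y, G.Adj u y → ∑ c, w s(u, y) c = 2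
  irregular : ∀ u ∈ U, ∀ v ∈ U, G.Adj u v →
    Promise.Avoids ⟨w s(u, v), (colorDeg G w · u)⟩ (colorDeg G w · v)
  mult_eq : ∀ u ∈ U, ∀ y ∉ U, G.Adj u y → w s(u, y) = (σ u y).mult
  fulfils : ∀ u ∈ U, ∀ y ∉ U, G.Adj u y → (σ u y).Fulfils (colorDeg G w · u)

namespace Realizes

variable {U K : Finset V} {σ p τ : V → V → Promise k} {w g : Sym2 V → Fin k → ℕ}

theorem isLIRk (h : Realizes G Finset.univ σ w) : IsLIRk G w := by
  refine ⟨fun e => ?_, fun u v huv c hc heq => ?_⟩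
  · induction e with | _ u v => exact h.sum_eq_two u (Finset.mem_univ u) v
  · exact h.irregular u (Finset.mem_univ u) v (Finset.mem_univ v) huv c
      (Nat.one_le_iff_ne_zero.mp hc) heq.symm

theorem union {D : V → Fin k → ℕ} (hUK : Disjoint U K)
    (hw : Realizes G U (fun u y => if y ∈ K then p u y else τ u y) w)
    (hD : ∀ v ∈ K, ∑ u ∈ G.neighborFinset v ∩ U, (p u v).mult +
      ∑ y ∈ G.neighborFinset v \ U, g s(v, y) = D v)
    (hp : ∀ v ∈ K, ∀ u ∈ G.neighborFinset v ∩ U, (p u v).Avoids (D v))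
    (hg_two : ∀ v ∈ K, ∀ y ∉ U, G.Adj v y → ∑ c, g s(v, y) c = 2)
    (hg_irr : ∀ v ∈ K, ∀ y ∈ K, G.Adj v y → Promise.Avoids ⟨g s(v, y), D v⟩ (D y))
    (hg_mult : ∀ v ∈ K, ∀ y ∉ U ∪ K, G.Adj v y → g s(v, y) = (τ v y).mult)
    (hg_ful : ∀ v ∈ K, ∀ y ∉ U ∪ K, G.Adj v y → (τ v y).Fulfils (D v)) :
    Realizes G (U ∪ K) τ (splice U w g) := by
  have hK {v} (hv : v ∈ K) : v ∉ U := Finset.disjoint_right.mp hUK hv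
  have mult_UK {u v} (hu : u ∈ U) (hv : v ∈ K) (huv : G.Adj u v) : w s(u, v) = (p u v).mult := by
    rw [hw.mult_eq u hu v (hK hv) huv, if_pos hv]
  have deg_U {u} (hu : u ∈ U) := colorDeg_splice_of_mem (G := G) hu w g
  have deg_K {v} (hv : v ∈ K) : (colorDeg G (splice U w g) · v) = D v := by
    rw [colorDeg_splice_of_notMem (hK hv), ← hD v hv]
    congr 1
    refine Finset.sum_congr rfl fun u hu => ?_
    simp only [Finset.mem_inter, SimpleGraph.mem_neighborFinset] at hu
    exact mult_UK hu.2 hv hu.1.symm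
  have irr_UK {u v} (hu : u ∈ U) (hv : v ∈ K) (huv : G.Adj u v) :
      Promise.Avoids ⟨w s(u, v), (colorDeg G w · u)⟩ (D v) := by
    have hful := hw.fulfils u hu v (hK hv) huv
    rw [if_pos hv] at hful
    rw [mult_UK hu hv huv]
    exact hful.avoids (hp v hv u (by simpa using ⟨huv.symm, hu⟩))
  constructor
  · intro v hv y hvy
    obtain hv | hv := Finset.mem_union.mp hv
    · simpa only [splice_of_mem hv] using hw.sum_eq_two v hv y hvy
    by_cases hy : y ∈ U
    · simpa only [Sym2.eq_swap (a := v), splice_of_mem hy] using hw.sum_eq_two y hy v hvy.symm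
    · simpa only [splice_of_notMem (hK hv) hy] using hg_two v hv y hy hvy
  · intro u hu v hv huv
    obtain hu | hu := Finset.mem_union.mp hu <;> obtain hv | hv := Finset.mem_union.mp hv
    · simpa only [deg_U hu, deg_U hv, splice_of_mem hu] using hw.irregular u hu v hv huv
    · simpa only [deg_U hu, deg_K hv, splice_of_mem hu] using irr_UK hu hv huv
    · simpa only [deg_K hu, deg_U hv, Sym2.eq_swap (a := u), splice_of_mem hv]
        using Promise.avoids_comm.mp (irr_UK hv hu huv.symm)
    · simpa only [deg_K hu, deg_K hv, splice_of_notMem (hK hu) (hK hv)]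
        using hg_irr u hu v hv huv
  · intro v hv y hy hvy
    obtain ⟨hyU, hyK⟩ := Finset.notMem_union.mp hy
    obtain hv | hv := Finset.mem_union.mp hv
    · simpa only [splice_of_mem hv, if_neg hyK] using hw.mult_eq v hv y hyU hvy
    · simpa only [splice_of_notMem (hK hv) hyU] using hg_mult v hv y hy hvy
  · intro v hv y hy hvy
    obtain hv | hv := Finset.mem_union.mp hv
    · obtain ⟨hyU, hyK⟩ := Finset.notMem_union.mp hy
      simpa only [deg_U hv, if_neg hyK] using hw.fulfils v hv y hyU hvy
    · simpa only [deg_K hv] using hg_ful v hv y hy hvy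

theorem exists_insert {v : V} {q : V → Promise k} {T : Fin k → ℕ} (hv : v ∉ U)
    (hw : Realizes G U (fun u y => if y = v then q u else τ u y) w)
    (hT : ∑ u ∈ G.neighborFinset v ∩ U, (q u).mult +
      ∑ y ∈ G.neighborFinset v \ U, (τ v y).mult = T)
    (hq : ∀ u ∈ G.neighborFinset v ∩ U, (q u).Avoids T)
    (hτ_two : ∀ y ∈ G.neighborFinset v \ U, ∑ c, (τ v y).mult c = 2)
    (hτ_ful : ∀ y ∈ G.neighborFinset v \ U, (τ v y).Fulfils T) :
    ∃ w', Realizes G (insert v U) τ w' := by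
  let g : Sym2 V → Fin k → ℕ := Function.extend (fun y => s(v, y)) (fun y => (τ v y).mult) 0
  have hg (y : V) : g s(v, y) = (τ v y).mult :=
    Function.Injective.extend_apply (fun _ _ => Sym2.congr_right.mp) _ _ y
  rw [Finset.insert_eq, Finset.union_comm]
  refine ⟨splice U w g, Realizes.union (p := fun u _ => q u) (D := fun _ => T)
    (Finset.disjoint_singleton_right.mpr hv) (by simpa using hw) ?_ ?_ ?_ ?_ ?_ ?_⟩ <;>
    simp only [Finset.mem_singleton, forall_eq, hg]
  · exact hT
  · exact hq
  · exact fun y hy hvy => hτ_two y (by simpa using ⟨hvy, hy⟩)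
  · exact fun h => (h.ne rfl).elim
  · simp
  · exact fun y hy hvy => hτ_ful y (by simpa [hvy] using fun h => hy (Finset.mem_union_left _ h))

theorem isLIRk_splice_compl {D : V → Fin k → ℕ} (hw : Realizes G Kᶜ σ w)
    (hD : ∀ v ∈ K, ∑ u ∈ G.neighborFinset v ∩ Kᶜ, (σ u v).mult +
      ∑ y ∈ G.neighborFinset v \ Kᶜ, g s(v, y) = D v)
    (hσ : ∀ v ∈ K, ∀ u ∈ G.neighborFinset v ∩ Kᶜ, (σ u v).Avoids (D v))
    (hg_two : ∀ v ∈ K, ∀ y ∈ K, G.Adj v y → ∑ c, g s(v, y) c = 2)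
    (hg_irr : ∀ v ∈ K, ∀ y ∈ K, G.Adj v y → Promise.Avoids ⟨g s(v, y), D v⟩ (D y)) :
    IsLIRk G (splice Kᶜ w g) := by
  have hUK : Kᶜ ∪ K = Finset.univ := compl_sup_eq_top
  have h := Realizes.union (τ := σ) disjoint_compl_left (by simpa using hw) hD hσ
    (by simpa using hg_two) hg_irr (by simp [hUK]) (by simp [hUK])
  rw [hUK] at h
  exact h.isLIRk

theorem lirTwoLE_of_compl_triangle {a b c : V} {x y z Ta Tb Tc : Fin k → ℕ}
    (hw : Realizes G {a, b, c}ᶜ σ w) (hab : G.Adj a b) (hac : G.Adj a c) (hbc : G.Adj b c)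
    (hx : ∑ i, x i = 2) (hy : ∑ i, y i = 2) (hz : ∑ i, z i = 2)
    (hTa : ∑ u ∈ G.neighborFinset a ∩ {a, b, c}ᶜ, (σ u a).mult + (x + z) = Ta)
    (hTb : ∑ u ∈ G.neighborFinset b ∩ {a, b, c}ᶜ, (σ u b).mult + (x + y) = Tb)
    (hTc : ∑ u ∈ G.neighborFinset c ∩ {a, b, c}ᶜ, (σ u c).mult + (y + z) = Tc)
    (ha : ∀ u ∈ G.neighborFinset a ∩ {a, b, c}ᶜ, (σ u a).Avoids Ta)
    (hb : ∀ u ∈ G.neighborFinset b ∩ {a, b, c}ᶜ, (σ u b).Avoids Tb)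
    (hc : ∀ u ∈ G.neighborFinset c ∩ {a, b, c}ᶜ, (σ u c).Avoids Tc)
    (hx_irr : Promise.Avoids ⟨x, Ta⟩ Tb) (hy_irr : Promise.Avoids ⟨y, Tb⟩ Tc)
    (hz_irr : Promise.Avoids ⟨z, Ta⟩ Tc) : LIRtwoLE G k := by
  let g (e : Sym2 V) : Fin k → ℕ := if a ∈ e then (if b ∈ e then x else z) else y
  let D (v : V) : Fin k → ℕ := if v = a then Ta else if v = b then Tb else Tc
  obtain ⟨gab, gac, gba, gbc, gca, gcb⟩ : g s(a, b) = x ∧ g s(a, c) = z ∧ g s(b, a) = x ∧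
      g s(b, c) = y ∧ g s(c, a) = z ∧ g s(c, b) = y := by
    simp [g, hab.ne, hac.ne, hab.ne', hbc.ne]
  obtain ⟨Da, Db, Dc⟩ : D a = Ta ∧ D b = Tb ∧ D c = Tc := by
    simp [D, hab.ne', hac.ne', hbc.ne']
  obtain ⟨na, nb, nc⟩ := neighborFinset_sdiff_compl_triangle hab hac hbc
  refine ⟨_, hw.isLIRk_splice_compl (g := g) (D := D) ?_ ?_ ?_ ?_⟩
  · simp only [Finset.forall_mem_insert, Finset.mem_singleton, forall_eq, na, nb, nc,
      Finset.sum_pair hab.ne, Finset.sum_pair hac.ne, Finset.sum_pair hbc.ne, gab, gac, gba, gbc,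
      gca, gcb, Da, Db, Dc, add_comm z y]
    exact ⟨hTa, hTb, hTc⟩
  · simp only [Finset.forall_mem_insert, Finset.mem_singleton, forall_eq, Da, Db, Dc]
    exact ⟨ha, hb, hc⟩
  · intro v _ u _ _
    simp only [g]
    split_ifs <;> assumption
  · simp only [Finset.forall_mem_insert, Finset.mem_singleton, forall_eq, G.irrefl, gab, gac, gba,
      gbc, gca, gcb, Da, Db, Dc, false_imp_iff, true_and, and_true]
    exact ⟨⟨fun _ => hx_irr, fun _ => hz_irr⟩,
      ⟨fun _ => Promise.avoids_comm.mp hx_irr, fun _ => hy_irr⟩,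
      fun _ => Promise.avoids_comm.mp hz_irr, fun _ => Promise.avoids_comm.mp hy_irr⟩

end Realizes

/-- Every vertex `u ∈ U` has an offer such that any choice of promises from these offers, made
independently for the edges leaving `U`, is realized by some coloring. The offers of the vertices
in `Z` are flexible. -/
def HasOffers (G : SimpleGraph V) (Z : Set V) (U : Finset V) : Prop :=
  ∃ O : V → List (Promise 3), (∀ u ∈ U, O u ∈ Promise.offers) ∧
    (∀ u ∈ U, u ∈ Z → O u ∈ Promise.flexible) ∧
    ∀ σ : V → V → Promise 3, (∀ u ∈ U, ∀ y ∉ U, G.Adj u y → σ u y ∈ O u) → ∃ w, Realizes G U σ w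

theorem hasOffers_empty (Z : Set V) : HasOffers G Z ∅ := by
  refine ⟨fun _ => [], by simp, by simp, fun σ _ => ⟨0, ?_⟩⟩
  constructor <;> simp

protected theorem HasOffers.insert {Z : Set V} {U : Finset V} {v : V} (h : HasOffers G Z U)
    (hv : v ∉ U) (hdeg : G.degree v ≤ 3) (hF : (G.neighborFinset v \ U).Nonempty)
    (hZ : v ∈ Z → (G.neighborFinset v \ U).card ≤ 1) : HasOffers G Z (insert v U) := by
  obtain ⟨O, hO, hO_flex, hO_real⟩ := h
  obtain ⟨R, hR, hR_flex, hR_resp⟩ := Promise.exists_offer (B := G.neighborFinset v ∩ U)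
    (fun u hu => hO u (Finset.mem_inter.mp hu).2) hF (by
      rwa [Finset.card_inter_add_card_sdiff, SimpleGraph.card_neighborFinset_eq_degree])
  have update_U {u} (hu : u ∈ U) : Function.update O v R u = O u :=
    Function.update_of_ne (ne_of_mem_of_not_mem hu hv) R O
  refine ⟨Function.update O v R, ?_, ?_, fun τ hτ => ?_⟩
  · simp only [Finset.forall_mem_insert, Function.update_self]
    exact ⟨hR, fun u hu => update_U hu ▸ hO u hu⟩
  · simp only [Finset.forall_mem_insert, Function.update_self]
    exact ⟨fun hvZ => hR_flex (hZ hvZ), fun u hu => update_U hu ▸ hO_flex u hu⟩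
  simp only [Finset.forall_mem_insert, Function.update_self] at hτ
  have hτv : ∀ y ∈ G.neighborFinset v \ U, τ v y ∈ R := by
    intro y hy
    simp only [Finset.mem_sdiff, SimpleGraph.mem_neighborFinset] at hy
    exact hτ.1 y (by simpa using ⟨hy.1.ne', hy.2⟩) hy.1
  obtain ⟨q, hq, hq_av, hτ_ful⟩ := hR_resp (τ v) hτv
  obtain ⟨w, hw⟩ := hO_real (fun u y => if y = v then q u else τ u y) (by
    intro u hu y hy huy
    split_ifs with hyv
    · subst hyv
      exact hq u (by simpa using ⟨huy.symm, hu⟩)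
    · exact update_U hu ▸ hτ.2 u hu y (by simpa using ⟨hyv, hy⟩) huy)
  exact hw.exists_insert hv rfl hq_av
    (fun y hy => Promise.sum_mult_eq_two R hR _ (hτv y hy)) hτ_ful

theorem hasOffers_compl {α : Type*} [LinearOrder α] (hdeg : ∀ v, G.degree v ≤ 3) {K : Finset V}
    {Z : Set V} {d : V → α} (hd : ∀ v ∉ K, ∃ y, G.Adj v y ∧ d y < d v)
    (hZ : ∀ v ∈ Z, v ∉ K → ∃ ρ, ∀ y, G.Adj v y → y ∈ K ∨ d y ≤ d v → y = ρ) :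
    HasOffers G Z Kᶜ := by
  suffices H : ∀ U ⊆ Kᶜ, (∀ x ∈ U, ∀ y ∉ K, d x < d y → y ∈ U) → HasOffers G Z U from
    H Kᶜ subset_rfl fun _ _ y hy _ => Finset.mem_compl.mpr hy
  intro U
  induction U using Finset.induction_on_min_value d with
  | empty => exact fun _ _ => hasOffers_empty Z
  | insert v U hvU hmin ih =>
    intro hK hup
    have hvK : v ∉ K := Finset.mem_compl.mp (hK (Finset.mem_insert_self v U))
    have hU : HasOffers G Z U := ih ((Finset.subset_insert v U).trans hK) fun x hx y hy hxy =>
      (Finset.mem_insert.mp (hup x (Finset.mem_insert_of_mem hx) y hy hxy)).resolve_left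
        (by rintro rfl; exact (hmin x hx).not_gt hxy)
    obtain ⟨y, hvy, hyv⟩ := hd v hvK
    refine hU.insert hvU (hdeg v) ⟨y, ?_⟩ fun hvZ => ?_
    · simpa using ⟨hvy, fun hy => (hmin y hy).not_gt hyv⟩
    · obtain ⟨ρ, hρ⟩ := hZ v hvZ hvK
      refine (Finset.card_le_card fun y hy => ?_).trans_eq (Finset.card_singleton ρ)
      simp only [Finset.mem_sdiff, SimpleGraph.mem_neighborFinset] at hy
      refine Finset.mem_singleton.mpr (hρ y hy.1 ?_)
      by_contra! hcon
      exact (Finset.mem_insert.mp (hup v (Finset.mem_insert_self v U) y hcon.1 hcon.2)).elim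
        hy.1.ne' hy.2

theorem HasOffers.lirTwoLE_of_compl_singleton {ρ : V}
    (h : HasOffers G (G.neighborSet ρ) {ρ}ᶜ) (h2 : 2 ≤ G.degree ρ) (h3 : G.degree ρ ≤ 3) :
    LIRtwoLE G 3 := by
  obtain ⟨O, -, hO_flex, hO_real⟩ := h
  have hN : G.neighborFinset ρ ⊆ {ρ}ᶜ := fun u hu => by
    simpa using ((G.mem_neighborFinset ρ u).mp hu).ne'
  have hN_inter : G.neighborFinset ρ ∩ {ρ}ᶜ = G.neighborFinset ρ := Finset.inter_eq_left.mpr hN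
  have hN_sdiff : G.neighborFinset ρ \ {ρ}ᶜ = ∅ := Finset.sdiff_eq_empty_iff_subset.mpr hN
  obtain ⟨q, hq, hq_av⟩ := Promise.exists_closing
    (fun u hu => hO_flex u (hN hu) ((G.mem_neighborFinset ρ u).mp hu)) h2 h3
  obtain ⟨w, hw⟩ := hO_real (fun u y => if y = ρ then q u else .idle) (by
    intro u _ y hy huy
    obtain rfl : y = ρ := by simpa using hy
    simpa using hq u ((G.mem_neighborFinset y u).mpr huy.symm))
  obtain ⟨w', hw'⟩ := hw.exists_insert (by simp) rfl (by simpa [hN_inter, hN_sdiff] using hq_av)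
    (by simp [hN_sdiff]) (by simp [hN_sdiff])
  rw [Finset.insert_compl_self] at hw'
  exact ⟨w', hw'.isLIRk⟩

theorem HasOffers.lirTwoLE_of_compl_triangle {Z : Set V} {a b c : V}
    (h : HasOffers G Z {a, b, c}ᶜ) (hdeg : ∀ v, G.degree v ≤ 3) (hab : G.Adj a b)
    (hac : G.Adj a c) (hbc : G.Adj b c) : LIRtwoLE G 3 := by
  obtain ⟨O, hO, -, hO_real⟩ := h
  obtain ⟨na, nb, nc⟩ := neighborFinset_sdiff_compl_triangle hab hac hbc
  have hB {v x y : V} (hxy : x ≠ y) (hv : G.neighborFinset v \ {a, b, c}ᶜ = {x, y}) :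
      (G.neighborFinset v ∩ {a, b, c}ᶜ).card ≤ 1 := by
    have := Finset.card_inter_add_card_sdiff (G.neighborFinset v) {a, b, c}ᶜ
    rw [hv, Finset.card_pair hxy, SimpleGraph.card_neighborFinset_eq_degree] at this
    linarith [hdeg v]
  have hO' (v : V) : ∀ u ∈ G.neighborFinset v ∩ {a, b, c}ᶜ, O u ∈ Promise.offers :=
    fun u hu => hO u (Finset.mem_inter.mp hu).2
  obtain ⟨p, q, r, x, hx, y, hy, z, hz, Ta, Tb, Tc, hp, hq, hr, hTa, hTb, hTc, hx_irr, hy_irr,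
    hz_irr⟩ := Promise.exists_triangle_closing (hB hbc.ne na) (hB hac.ne nb) (hB hab.ne nc)
      (hO' a) (hO' b) (hO' c)
  obtain ⟨w, hw⟩ := hO_real (fun u v => if v = a then p u else if v = b then q u else r u) (by
    intro u hu v hv huv
    have hv' : v = a ∨ v = b ∨ v = c := by simpa [or_iff_not_imp_left] using hv
    have hu_mem : u ∈ G.neighborFinset v ∩ {a, b, c}ᶜ :=
      Finset.mem_inter.mpr ⟨(G.mem_neighborFinset v u).mpr huv.symm, hu⟩
    obtain rfl | rfl | rfl := hv'
    · simpa using (hp u hu_mem).1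
    · simpa [hab.ne'] using (hq u hu_mem).1
    · simpa [hac.ne', hbc.ne'] using (hr u hu_mem).1)
  refine hw.lirTwoLE_of_compl_triangle hab hac hbc (Promise.sum_eq_two_of_mem_doubles x hx)
    (Promise.sum_eq_two_of_mem_doubles y hy) (Promise.sum_eq_two_of_mem_doubles z hz)
    ?_ ?_ ?_ ?_ ?_ ?_ hx_irr hy_irr hz_irr <;>
    simp only [if_true, if_neg hab.ne', if_neg hac.ne', if_neg hbc.ne']
  exacts [hTa, hTb, hTc, fun u hu => (hp u hu).2, fun u hu => (hq u hu).2, fun u hu => (hr u hu).2]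

theorem lirTwoLE_of_not_cliqueFree (hG : G.Connected) (hdeg : ∀ v, G.degree v ≤ 3)
    (hclique : ¬ G.CliqueFree 3) : LIRtwoLE G 3 := by
  simp only [SimpleGraph.CliqueFree, not_forall, not_not] at hclique
  obtain ⟨K, hK⟩ := hclique
  obtain ⟨a, b, c, hab, hac, hbc, rfl⟩ := SimpleGraph.is3Clique_iff.mp hK
  refine (hasOffers_compl (Z := ∅) (d := (G.dist · a)) hdeg (fun v hv => ?_)
    (by simp)).lirTwoLE_of_compl_triangle hdeg hab hac hbc
  exact exists_adj_dist_lt hG (ne_of_mem_of_not_mem (Finset.mem_insert_self _ _) hv).symm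

theorem lirTwoLE_of_two_le_degree (hG : G.Connected) (hdeg : ∀ v, G.degree v ≤ 3)
    (hfree : G.CliqueFree 3) {ρ : V} (hρ : 2 ≤ G.degree ρ) : LIRtwoLE G 3 := by
  refine (hasOffers_compl (d := (G.dist · ρ)) hdeg (fun v hv => ?_)
    (fun v hv _ => ⟨ρ, fun y hvy hy => ?_⟩)).lirTwoLE_of_compl_singleton hρ (hdeg ρ)
  · exact exists_adj_dist_lt hG (Finset.notMem_singleton.mp hv)
  have hvρ : G.Adj v ρ := hv.symm
  obtain hy | hy := hy
  · exact Finset.mem_singleton.mp hy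
  by_contra hne
  rw [SimpleGraph.dist_eq_one_iff_adj.mpr hvρ] at hy
  have hyρ : G.Adj y ρ :=
    SimpleGraph.dist_eq_one_iff_adj.mp (le_antisymm hy (hG.pos_dist_of_ne hne))
  exact hfree {v, y, ρ} (SimpleGraph.is3Clique_triple_iff.mpr ⟨hvy, hvρ, hyρ⟩)

theorem lirTwoLE_of_subsingleton [Subsingleton V] : LIRtwoLE G k := by
  obtain rfl : G = ⊥ := Subsingleton.elim _ _
  exact ⟨0, by simp, by simp⟩

end Graph

/-- If `G` is a connected subcubic simple graph (every vertex has degree at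
most 3) not isomorphic to `K₂`, then `lir(²G) ≤ 3`. -/
theorem lir_two_mul_subcubic {V : Type*} [Fintype V] [DecidableEq V]
    (G : SimpleGraph V) (hconn : G.Connected)
    (hsub : ∀ v : V, G.degree v ≤ 3)
    (hK2 : ¬ Nonempty (G ≃g (⊤ : SimpleGraph (Fin 2)))) :
    LIRtwoLE G 3 := by
  by_cases hfree : G.CliqueFree 3
  · by_cases hdeg : ∃ ρ, 2 ≤ G.degree ρ
    · obtain ⟨ρ, hρ⟩ := hdeg
      exact lirTwoLE_of_two_le_degree hconn hsub hfree hρ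
    · have hcard := card_le_two_of_degree_le_one hconn fun v =>
        Nat.le_of_lt_succ (not_le.mp fun hv => hdeg ⟨v, hv⟩)
      have hcard_ne : Fintype.card V ≠ 2 := fun hV =>
        hK2 (nonempty_iso_top_of_card_eq_two hconn hV)
      have : Subsingleton V := Fintype.card_le_one_iff_subsingleton.mp (by omega)
      exact lirTwoLE_of_subsingleton
  · exact lirTwoLE_of_not_cliqueFree hconn hsub hfree
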